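/- Degree criterion for Q-graphs: let G be a simple graph on the grid vertex set V = Fin m × Fin n. If the signless Laplacian Q(G), regarded as a complex matrix, is separable, and the partial transpose graph G^Γ is bipartite, then D(G) = D(G^Γ). -/

import Mathlib

open Matrix

-- Adjacency matrix of a simple graph, with real entries.
open scoped Classical in
noncomputable def adjM {V : Type*} [Fintype V] (G : SimpleGraph V) : Matrix V V ℝ :=
  Matrix.of fun u v => if G.Adj u v then 1 else 0

-- Degree matrix of a simple graph: diagonal, with the vertex degrees on the diagonal.
open scoped Classical in
noncomputable def degM {V : Type*} [Fintype V] [DecidableEq V] (G : SimpleGraph V) :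
    Matrix V V ℝ :=
  Matrix.diagonal fun v => ∑ u, if G.Adj v u then (1 : ℝ) else 0

/-- Signless Laplacian `Q = D + A`. -/
noncomputable def lapQ {V : Type*} [Fintype V] [DecidableEq V] (G : SimpleGraph V) :
    Matrix V V ℝ :=
  degM G + adjM G

/-- Partial transpose graph: `(i,j) ~ (k,l)` iff `(i,l) ~ (k,j)` in `G`. -/
def ptGraph {m n : ℕ} (G : SimpleGraph (Fin m × Fin n)) : SimpleGraph (Fin m × Fin n) where
  Adj p q := G.Adj (p.1, q.2) (q.1, p.2)
  symm := ⟨fun _ _ h => G.symm.symm _ _ h⟩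
  loopless := ⟨fun p h => G.loopless.irrefl p h⟩

/-- A simple graph is bipartite if it admits a proper 2-coloring. -/
def IsBipartite {V : Type*} (G : SimpleGraph V) : Prop :=
  ∃ c : V → Bool, ∀ u v, G.Adj u v → c u ≠ c v

/-- Separability of a `V × V` complex matrix, `V = Fin m × Fin n`. -/
def MatrixIsSeparable {m n : ℕ} (ρ : Matrix (Fin m × Fin n) (Fin m × Fin n) ℂ) : Prop :=
  ∃ (T : Finset ℕ) (x : ℕ → Fin m → ℂ) (y : ℕ → Fin n → ℂ),
    ∀ (i k : Fin m) (j l : Fin n),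
      ρ (i, j) (k, l) = ∑ t ∈ T, x t i * star (x t k) * (y t j * star (y t l))

/-!
Transposing the second tensor factor conjugates each `y_t`, so a separable matrix has positive
semidefinite partial transpose. For `Q(G)` this partial transpose is `D(G) + A(G^Γ)`. If `s` is the
`±1` vector of a bipartition of `G^Γ`, then `A(G^Γ) s = -D(G^Γ) s`, so the quadratic form of the
partial transpose at `s` is `tr D(G) - tr D(G^Γ)`, which vanishes because `G` and `G^Γ` have equally
many edges. A zero of a positive semidefinite form lies in the kernel, so
`(D(G) - D(G^Γ)) s = 0`, and no entry of `s` is zero.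
-/

/-- The partial transpose of a matrix on a product index set, taken in the second factor. -/
def partialTranspose {α β R : Type*} (M : Matrix (α × β) (α × β) R) : Matrix (α × β) (α × β) R :=
  Matrix.of fun p q => M (p.1, q.2) (q.1, p.2)

section PartialTranspose

variable {α β R : Type*}

theorem partialTranspose_add [Add R] (M N : Matrix (α × β) (α × β) R) :
    partialTranspose (M + N) = partialTranspose M + partialTranspose N :=
  rfl

theorem partialTranspose_diagonal [DecidableEq α] [DecidableEq β] [Zero R] (d : α × β → R) :
    partialTranspose (diagonal d) = diagonal d := by
  ext ⟨i, j⟩ ⟨k, l⟩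
  simp only [partialTranspose, of_apply, diagonal_apply, Prod.mk.injEq]
  grind

theorem sum_sum_partialTranspose [Fintype α] [Fintype β] [AddCommMonoid R]
    (M : Matrix (α × β) (α × β) R) :
    ∑ p, ∑ q, partialTranspose M p q = ∑ p, ∑ q, M p q := by
  simp only [partialTranspose, of_apply, Fintype.sum_prod_type]
  refine Finset.sum_congr rfl fun i _ => ?_
  calc ∑ j, ∑ k, ∑ l, M (i, l) (k, j)
      = ∑ k, ∑ j, ∑ l, M (i, l) (k, j) := Finset.sum_comm
    _ = ∑ k, ∑ l, ∑ j, M (i, l) (k, j) := Finset.sum_congr rfl fun k _ => Finset.sum_comm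
    _ = ∑ l, ∑ k, ∑ j, M (i, l) (k, j) := Finset.sum_comm

end PartialTranspose

open scoped ComplexOrder in
/-- The Peres–Horodecki criterion. -/
theorem MatrixIsSeparable.posSemidef_partialTranspose {m n : ℕ}
    {ρ : Matrix (Fin m × Fin n) (Fin m × Fin n) ℂ} (hρ : MatrixIsSeparable ρ) :
    (partialTranspose ρ).PosSemidef := by
  obtain ⟨T, x, y, hxy⟩ := hρ
  let z (t : ℕ) (p : Fin m × Fin n) : ℂ := x t p.1 * star (y t p.2)
  have sum_projections : partialTranspose ρ = ∑ t ∈ T, vecMulVec (z t) (star (z t)) := by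
    ext ⟨i, j⟩ ⟨k, l⟩
    simp only [partialTranspose, of_apply, hxy, Matrix.sum_apply, vecMulVec_apply, Pi.star_apply, z,
      star_mul, star_star]
    exact Finset.sum_congr rfl fun t _ => by ring
  rw [sum_projections]
  exact posSemidef_sum T fun t _ => posSemidef_vecMulVec_self_star (z t)

open scoped ComplexOrder in
theorem posSemidef_of_map_ofReal {ι 𝕜 : Type*} [RCLike 𝕜] {A : Matrix ι ι ℝ}
    (hA : (A.map ((↑) : ℝ → 𝕜)).PosSemidef) : A.PosSemidef := by
  refine ⟨Matrix.map_injective (RCLike.ofReal_injective (K := 𝕜)) ?_, fun x => ?_⟩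
  · exact (conjTranspose_map _ fun a => (RCLike.conj_ofReal a).symm).trans hA.isHermitian
  · have form_nonneg := hA.2 (x.mapRange ((↑) : ℝ → 𝕜) RCLike.ofReal_zero)
    simp only [Finsupp.sum, Finsupp.support_mapRange_of_injective _ _ RCLike.ofReal_injective,
      Finsupp.mapRange_apply, map_apply, RCLike.star_def, RCLike.conj_ofReal] at form_nonneg
    exact_mod_cast form_nonneg

section SignlessLaplacian

variable {V : Type*} [Fintype V] [DecidableEq V]

theorem trace_degM (G : SimpleGraph V) : (degM G).trace = ∑ v, ∑ u, adjM G v u :=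
  trace_diagonal _

theorem IsBipartite.exists_sign_lapQ_mulVec_eq_zero {G : SimpleGraph V} (hG : IsBipartite G) :
    ∃ s : V → ℝ, (∀ v, s v * s v = 1) ∧ lapQ G *ᵥ s = 0 := by
  obtain ⟨c, hc⟩ := hG
  let s (v : V) : ℝ := if c v then 1 else -1
  have adj_mul_sign (u v : V) : adjM G u v * s v = -(adjM G u v * s u) := by
    by_cases huv : G.Adj u v
    · have := hc u v huv
      cases hu : c u <;> cases hv : c v <;> simp_all [s]
    · simp [adjM, huv]
  refine ⟨s, fun v => by by_cases hv : c v <;> simp [s, hv], ?_⟩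
  ext u
  rw [lapQ, add_mulVec, Pi.add_apply, degM, mulVec_diagonal]
  simp only [mulVec, dotProduct, adj_mul_sign, Finset.sum_neg_distrib, ← Finset.sum_mul]
  exact add_neg_cancel _

theorem IsBipartite.diagonal_eq_degM_of_posSemidef {G : SimpleGraph V} (hG : IsBipartite G)
    {d : V → ℝ} (hpos : (diagonal d + adjM G).PosSemidef)
    (htrace : (diagonal d).trace ≤ (degM G).trace) : diagonal d = degM G := by
  obtain ⟨s, s_mul_self, lapQ_mulVec⟩ := hG.exists_sign_lapQ_mulVec_eq_zero
  have mulVec_sign (v : V) :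
      ((diagonal d + adjM G) *ᵥ s) v = (d v - degM G v v) * s v := by
    have split : diagonal d + adjM G = diagonal d - degM G + lapQ G := by rw [lapQ]; abel
    rw [split, add_mulVec, lapQ_mulVec, add_zero, degM, diagonal_sub, mulVec_diagonal,
      diagonal_apply_eq]
  have form_eq : star s ⬝ᵥ (diagonal d + adjM G) *ᵥ s = (diagonal d).trace - (degM G).trace := by
    rw [← trace_sub]
    refine Finset.sum_congr rfl fun v _ => ?_
    rw [mulVec_sign, diag_apply, Matrix.sub_apply, diagonal_apply_eq, Pi.star_apply, star_trivial]
    linear_combination (d v - degM G v v) * s_mul_self v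
  have form_eq_zero : star s ⬝ᵥ (diagonal d + adjM G) *ᵥ s = 0 :=
    le_antisymm (form_eq.trans_le (sub_nonpos.mpr htrace)) (hpos.dotProduct_mulVec_nonneg s)
  have mulVec_eq_zero := (hpos.dotProduct_mulVec_zero_iff s).mp form_eq_zero
  refine congrArg diagonal (funext fun v => ?_)
  have defect_mul_sign : (d v - degM G v v) * s v = 0 := by
    rw [← mulVec_sign, mulVec_eq_zero, Pi.zero_apply]
  have sign_ne_zero : s v ≠ 0 := left_ne_zero_of_mul_eq_one (s_mul_self v)
  have defect_eq_zero := (mul_eq_zero.mp defect_mul_sign).resolve_right sign_ne_zero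
  rwa [degM, diagonal_apply_eq, sub_eq_zero] at defect_eq_zero

end SignlessLaplacian

section PartialTransposeGraph

variable {m n : ℕ} (G : SimpleGraph (Fin m × Fin n))

theorem partialTranspose_adjM : partialTranspose (adjM G) = adjM (ptGraph G) :=
  rfl

theorem partialTranspose_lapQ : partialTranspose (lapQ G) = degM G + adjM (ptGraph G) := by
  rw [lapQ, partialTranspose_add, partialTranspose_adjM, degM, partialTranspose_diagonal]

theorem trace_degM_ptGraph : (degM (ptGraph G)).trace = (degM G).trace := by
  rw [trace_degM, trace_degM, ← partialTranspose_adjM, sum_sum_partialTranspose]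

end PartialTransposeGraph

theorem degree_criterion_Q_general {m n : ℕ} {G : SimpleGraph (Fin m × Fin n)}
    (hppt : (partialTranspose (lapQ G)).PosSemidef) (hbip : IsBipartite (ptGraph G)) :
    degM G = degM (ptGraph G) := by
  rw [partialTranspose_lapQ] at hppt
  exact hbip.diagonal_eq_degM_of_posSemidef hppt (trace_degM_ptGraph G).ge

/-- Degree criterion for `Q`-graphs: if `Q(G)` is separable and `G^Γ` is bipartite, then
`D(G) = D(G^Γ)`. -/
theorem degree_criterion_Q (m n : ℕ) (G : SimpleGraph (Fin m × Fin n))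
    (hsep : MatrixIsSeparable ((lapQ G).map fun a => (a : ℂ)))
    (hbip : IsBipartite (ptGraph G)) :
    degM G = degM (ptGraph G) :=
  degree_criterion_Q_general
    (posSemidef_of_map_ofReal (𝕜 := ℂ) hsep.posSemidef_partialTranspose) hbip
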